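/- Let R be a commutative ring and x a perfect complex of R-modules that is invertible in the derived category D(R) (i.e., there is a complex y with x ⊗^L_R y ≅ R[0]). Then the total homology ⊕_i H_i(x) is an invertible R-module; in particular each H_i(x) is finitely generated projective, and if Spec(R) is connected then H_i(x) is nonzero in exactly one degree b, with H_b(x) invertible of rank 1. -/

import Mathlib

set_option maxHeartbeats 1000000
set_option synthInstance.maxHeartbeats 1000000

open CategoryTheory CategoryTheory.Limits MonoidalCategory TensorProduct

section Instances

variable {R : Type} [CommRing R]

noncomputable instance curriedTensorAdditive : (curriedTensor (ModuleCat R)).Additive where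
  map_add := by
    intros
    ext Z : 2
    simp [curriedTensor]

noncomputable instance curriedTensorObjAdditive (X : ModuleCat R) :
    ((curriedTensor (ModuleCat R)).obj X).Additive where
  map_add := by
    intros
    simp [curriedTensor]

noncomputable instance curriedTensorObjPreserves (X : ModuleCat R) :
    PreservesColimits ((curriedTensor (ModuleCat R)).obj X) :=
  inferInstanceAs (PreservesColimits (tensorLeft X))

noncomputable instance curriedTensorFlipObjPreserves (X : ModuleCat R) :
    PreservesColimits ((curriedTensor (ModuleCat R)).flip.obj X) :=
  preservesColimits_of_natIso
    (F := tensorLeft X)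
    (NatIso.ofComponents (fun Y => β_ X Y) (by
      intros Y Y' f
      simp [curriedTensor]))

end Instances

/-!
A quasi-isomorphism `ev : x ⊗ y → R` together with a cycle `z` representing `1` behaves like a
duality between `x` and `y`, except that the triangle identity is not available: its composite is
some chain map `τ : x → x` up to sign (`UnitQuasiIso.twist`). Contracting a homotopy on
`(x ⊗ y) ⊗ x` shows that `tr θ • a` and `τ (θ (τ a))` are homologous for every chain endomorphism
`θ` and cycle `a`. For the rank one endomorphism `θ = μ(-) • τ c` built from a cycle `c` and a
cocycle `μ`, this becomes the exchange relation `μ c • a ∼ μ (τ a) • c`. Hence the total homology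
is invertible as soon as every maximal ideal `m` admits a cycle `c` and a cocycle `μ` with
`μ c ∉ m`.

The same relations modulo `m` show that `x ⊗ R/m` has homology in exactly one degree: in at most
one by the exchange relation, in at least one because `tr 1 = 1`. Next to that degree `x` is
contractible modulo `m`, so by Cayley–Hamilton it is contractible up to a scalar outside `m`, and
this is enough to lift a cycle and a cocycle pairing nontrivially modulo `m`.
-/

/-- A complex of `R`-modules recorded on its total module: a square-zero operator `d` together with
the operator `sign` acting as `(-1)ⁱ` in degree `i`. The grading itself is forgotten, since only
these signs enter the differentials of tensor products and of internal homs. -/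
structure SignedComplex (R M : Type*) [CommRing R] [AddCommGroup M] [Module R M] where
  d : M →ₗ[R] M
  sign : M →ₗ[R] M
  d_d : ∀ m, d (d m) = 0
  sign_sign : ∀ m, sign (sign m) = m
  sign_d : ∀ m, sign (d m) = -d (sign m)

namespace SignedComplex

variable {R M N P : Type*} [CommRing R] [AddCommGroup M] [Module R M] [AddCommGroup N] [Module R N]
  [AddCommGroup P] [Module R P]

/-- Chain maps of degree zero modulo two. -/
structure IsHom (X : SignedComplex R M) (Y : SignedComplex R N) (φ : M →ₗ[R] N) : Prop where
  map_d : ∀ m, φ (X.d m) = Y.d (φ m)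
  map_sign : ∀ m, φ (X.sign m) = Y.sign (φ m)

/-- Vanishing of the homology of a complex. -/
def Acyclic (X : SignedComplex R M) : Prop :=
  ∀ m, X.d m = 0 → ∃ v, X.d v = m

/-- The tensor product of complexes, with `d (m ⊗ n) = d m ⊗ n + sign m ⊗ d n`. -/
def tensor (X : SignedComplex R M) (Y : SignedComplex R N) : SignedComplex R (M ⊗[R] N) where
  d := TensorProduct.map X.d .id + TensorProduct.map X.sign Y.d
  sign := TensorProduct.map X.sign Y.sign
  d_d t := by
    induction t with
    | zero => simp
    | tmul m n => simp [X.d_d, Y.d_d, X.sign_d, TensorProduct.neg_tmul]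
    | add t u ht hu => simp only [map_add, ht, hu, add_zero]
  sign_sign t := by
    induction t with
    | zero => simp
    | tmul m n => simp [X.sign_sign, Y.sign_sign]
    | add t u ht hu => simp only [map_add, ht, hu]
  sign_d t := by
    induction t with
    | zero => simp
    | tmul m n =>
      simp [X.sign_sign, X.sign_d, Y.sign_d, TensorProduct.neg_tmul, TensorProduct.tmul_neg,
        add_comm]
    | add t u ht hu => simp only [map_add, ht, hu, neg_add]

@[simp]
lemma tensor_d_tmul (X : SignedComplex R M) (Y : SignedComplex R N) (m : M) (n : N) :
    (X.tensor Y).d (m ⊗ₜ n) = X.d m ⊗ₜ n + X.sign m ⊗ₜ Y.d n := rfl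

@[simp]
lemma tensor_sign_tmul (X : SignedComplex R M) (Y : SignedComplex R N) (m : M) (n : N) :
    (X.tensor Y).sign (m ⊗ₜ n) = X.sign m ⊗ₜ Y.sign n := rfl

/-- The internal hom of complexes; the cycles fixed by `sign` are the chain maps. -/
def hom (X : SignedComplex R M) (Y : SignedComplex R N) : SignedComplex R (M →ₗ[R] N) where
  d := LinearMap.compRight R Y.d -
    LinearMap.lcomp R N (X.sign ∘ₗ X.d) ∘ₗ LinearMap.compRight R Y.sign
  sign := LinearMap.lcomp R N X.sign ∘ₗ LinearMap.compRight R Y.sign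
  d_d φ := by ext m; simp [X.d_d, Y.d_d, X.sign_d, Y.sign_d]
  sign_sign φ := by ext m; simp [X.sign_sign, Y.sign_sign]
  sign_d φ := by ext m; simp [X.sign_d, X.sign_sign, Y.sign_d, sub_eq_add_neg, add_comm]

lemma hom_d_apply (X : SignedComplex R M) (Y : SignedComplex R N) (φ : M →ₗ[R] N) (m : M) :
    (X.hom Y).d φ m = Y.d (φ m) - Y.sign (φ (X.sign (X.d m))) := rfl

lemma IsHom.hom_d_eq_zero {X : SignedComplex R M} {Y : SignedComplex R N} {φ : M →ₗ[R] N}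
    (hφ : IsHom X Y φ) : (X.hom Y).d φ = 0 := by
  ext m
  simp [hom_d_apply, hφ.map_d, hφ.map_sign, Y.sign_sign]

lemma acyclic_of_filtration (X : SignedComplex R M) (F : ℕ → Set M) (N : ℕ) (h0 : F 0 = Set.univ)
    (hN : F N ⊆ {0}) (hF : ∀ n, ∀ m ∈ F n, X.d m = 0 → ∃ v, m - X.d v ∈ F (n + 1)) :
    X.Acyclic := by
  intro m hm
  have key : ∀ n, ∃ v, m - X.d v ∈ F n := fun n ↦ by
    induction n with
    | zero => exact ⟨0, h0 ▸ Set.mem_univ _⟩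
    | succ n ih =>
      obtain ⟨v, hv⟩ := ih
      obtain ⟨u, hu⟩ := hF n _ hv (by rw [map_sub, hm, X.d_d, sub_zero])
      exact ⟨v + u, by rwa [map_add, ← sub_sub]⟩
  obtain ⟨v, hv⟩ := key N
  exact ⟨v, (sub_eq_zero.mp (hN hv)).symm⟩

end SignedComplex

lemma exists_comp_eq_of_mem_range {R P M N : Type*} [CommRing R] [AddCommGroup P] [Module R P]
    [Module.Projective R P] [AddCommGroup M] [Module R M] [AddCommGroup N] [Module R N]
    (f : M →ₗ[R] N) (g : P →ₗ[R] N) (hg : ∀ p, g p ∈ LinearMap.range f) :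
    ∃ h : P →ₗ[R] M, ∀ p, f (h p) = g p := by
  obtain ⟨h, hh⟩ := Module.projective_lifting_property f.rangeRestrict
    (g.codRestrict (LinearMap.range f) hg) f.surjective_rangeRestrict
  exact ⟨h, fun p ↦ congrArg Subtype.val (LinearMap.congr_fun hh p)⟩

section DirectSum

open scoped DirectSum

variable {R : Type*} [CommRing R] {A : ℤ → Type*} [∀ i, AddCommGroup (A i)] [∀ i, Module R (A i)]

lemma sum_lof_comp_component {a b : ℤ} (hA : ∀ i, i < a ∨ b < i → Subsingleton (A i)) :
    ∑ i ∈ Finset.Icc a b, DirectSum.lof R ℤ A i ∘ₗ DirectSum.component R ℤ A i = .id := by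
  refine DirectSum.linearMap_ext R fun j ↦ LinearMap.ext fun m ↦ ?_
  simp only [LinearMap.coe_comp, LinearMap.coe_sum, Function.comp_apply, Finset.sum_apply,
    LinearMap.id_coe, id_eq]
  by_cases hj : j ∈ Finset.Icc a b
  · rw [Finset.sum_eq_single_of_mem j hj, DirectSum.component.lof_self]
    intro i _ hij
    rw [DirectSum.component.of, dif_neg hij.symm, map_zero]
  · have := hA j (by simp only [Finset.mem_Icc] at hj; omega)
    simp [Subsingleton.elim m 0]

end DirectSum

namespace SignedComplex

open scoped DirectSum

variable {R : Type*} [CommRing R]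

/-- The total module of a cochain complex, as a signed complex. -/
noncomputable def total (x : CochainComplex (ModuleCat R) ℤ) : SignedComplex R (⨁ i, x.X i) where
  d := DirectSum.toModule R ℤ _ fun i ↦
    DirectSum.lof R ℤ (fun i ↦ x.X i) (i + 1) ∘ₗ (x.d i (i + 1)).hom
  sign := DirectSum.lmap fun i ↦ i.negOnePow • LinearMap.id
  d_d m := by
    induction m using DirectSum.induction_on with
    | zero => simp
    | of i a => simp [← DirectSum.lof_eq_of R, ← ModuleCat.comp_apply]
    | add m n hm hn => simp only [map_add, hm, hn, add_zero]
  sign_sign m := by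
    induction m using DirectSum.induction_on with
    | zero => simp
    | of i a => simp [← DirectSum.lof_eq_of R, smul_smul]
    | add m n hm hn => simp only [map_add, hm, hn]
  sign_d m := by
    induction m using DirectSum.induction_on with
    | zero => simp
    | of i a => simp [← DirectSum.lof_eq_of R, Int.negOnePow_succ, Units.neg_smul]
    | add m n hm hn => simp only [map_add, hm, hn, neg_add]

variable {x : CochainComplex (ModuleCat R) ℤ}

lemma total_d_lof {i j : ℤ} (h : i + 1 = j) (a : x.X i) :
    (total x).d (DirectSum.lof R ℤ (fun i ↦ x.X i) i a) =
      DirectSum.lof R ℤ (fun i ↦ x.X i) j ((x.d i j).hom a) := by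
  subst h
  simp [total]

@[simp]
lemma total_sign_lof (i : ℤ) (a : x.X i) :
    (total x).sign (DirectSum.lof R ℤ (fun i ↦ x.X i) i a) =
      i.negOnePow • DirectSum.lof R ℤ (fun i ↦ x.X i) i a := by
  simp [total]

lemma total_d_apply (m : ⨁ i, x.X i) {i j : ℤ} (h : i + 1 = j) :
    (total x).d m j = (x.d i j).hom (m i) := by
  induction m using DirectSum.induction_on with
  | zero => simp
  | of k a =>
    rw [← DirectSum.lof_eq_of R, total_d_lof rfl, DirectSum.lof_eq_of, DirectSum.lof_eq_of]
    by_cases hk : k = i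
    · subst hk h
      simp
    · rw [DirectSum.of_eq_of_ne _ _ _ (by omega), DirectSum.of_eq_of_ne _ _ _ (Ne.symm hk),
        map_zero]
  | add m n hm hn => rw [map_add, DirectSum.add_apply, hm, hn, DirectSum.add_apply, map_add]

lemma lTensor_component_tensor_total_d {K : Type*} [AddCommGroup K] [Module R K]
    (k : SignedComplex R K) (i : ℤ) (w : K ⊗[R] ⨁ i, x.X i) :
    (DirectSum.component R ℤ (fun i ↦ x.X i) i).lTensor K ((k.tensor (total x)).d w) =
      k.d.rTensor _ ((DirectSum.component R ℤ (fun i ↦ x.X i) i).lTensor K w) +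
        TensorProduct.map k.sign (x.d (i - 1) i).hom
          ((DirectSum.component R ℤ (fun i ↦ x.X i) (i - 1)).lTensor K w) := by
  induction w with
  | zero => simp
  | tmul c m => simp [← DirectSum.apply_eq_component, total_d_apply m (sub_add_cancel i 1)]
  | add w w' hw hw' => simp only [map_add, hw, hw']; abel

-- Filter by the degree of the second factor: its lowest component is a cycle for `k.d ⊗ 1`.
lemma Acyclic.tensor_total {K : Type*} [AddCommGroup K] [Module R K] {k : SignedComplex R K}
    (hk : k.Acyclic) [∀ i, Module.Flat R (x.X i)] {a b : ℤ}
    (hx : ∀ i, i < a ∨ b < i → Subsingleton (x.X i)) : (k.tensor (total x)).Acyclic := by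
  let comp (i : ℤ) := DirectSum.component R ℤ (fun i ↦ x.X i) i
  let lof (i : ℤ) := DirectSum.lof R ℤ (fun i ↦ x.X i) i
  refine acyclic_of_filtration _ (fun n ↦ {w | ∀ i < a + n, (comp i).lTensor K w = 0})
    (b - a + 1).toNat ?_ ?_ ?_
  · refine Set.eq_univ_of_forall fun w i hi ↦ ?_
    have := hx i (.inl (by simpa using hi))
    rw [Subsingleton.elim (comp i) 0, LinearMap.lTensor_zero, LinearMap.zero_apply]
  · intro w hw
    rw [Set.mem_singleton_iff, ← LinearMap.id_apply (R := R) w, ← LinearMap.lTensor_id,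
      ← sum_lof_comp_component hx, ← LinearMap.coe_lTensorHom, map_sum, LinearMap.sum_apply]
    refine Finset.sum_eq_zero fun i hi ↦ ?_
    rw [LinearMap.coe_lTensorHom, LinearMap.lTensor_comp_apply, hw i ?_, map_zero]
    simp only [Finset.mem_Icc] at hi
    omega
  · intro n w hw hdw
    have hd : k.d.rTensor _ ((comp (a + n)).lTensor K w) = 0 := by
      have := lTensor_component_tensor_total_d k (a + n) w
      rwa [hw (a + n - 1) (by omega), map_zero, add_zero, hdw, map_zero, eq_comm] at this
    obtain ⟨u, hu⟩ := (Module.Flat.rTensor_exact (x.X (a + n)) (f := k.d) (g := k.d)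
      (fun c ↦ ⟨hk c, fun ⟨v, hv⟩ ↦ hv ▸ k.d_d v⟩) _).mp hd
    have comp_lof (i : ℤ) (hi : i < a + n) :
        (comp i).lTensor K ((lof (a + n)).lTensor K u) = 0 := by
      rw [← LinearMap.lTensor_comp_apply, DirectSum.component_comp_lof, dif_neg hi.ne',
        LinearMap.lTensor_zero, LinearMap.zero_apply]
    refine ⟨(lof (a + n)).lTensor K u, fun i hi ↦ ?_⟩
    rw [map_sub, lTensor_component_tensor_total_d, comp_lof (i - 1) (by push_cast at hi; omega),
      map_zero, add_zero]
    obtain hi | rfl : i < a + n ∨ i = a + n := by push_cast at hi; omega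
    · rw [hw i hi, comp_lof i hi, map_zero, sub_zero]
    · rw [← LinearMap.lTensor_comp_apply, DirectSum.component_comp_lof_same, LinearMap.lTensor_id,
        LinearMap.id_apply, hu, sub_self]

-- Filter by the degree in the source: on its highest component a cycle takes values in cycles.
lemma Acyclic.hom_total {L : Type*} [AddCommGroup L] [Module R L] {l : SignedComplex R L}
    (hl : l.Acyclic) [∀ i, Module.Projective R (x.X i)] {a b : ℤ}
    (hx : ∀ i, i < a ∨ b < i → Subsingleton (x.X i)) : ((total x).hom l).Acyclic := by
  let comp (i : ℤ) := DirectSum.component R ℤ (fun i ↦ x.X i) i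
  let lof (i : ℤ) := DirectSum.lof R ℤ (fun i ↦ x.X i) i
  have hom_d_lof (φ : (⨁ i, x.X i) →ₗ[R] L) (i : ℤ) (hφ : ∀ c, φ (lof (i + 1) c) = 0)
      (c : x.X i) : ((total x).hom l).d φ (lof i c) = l.d (φ (lof i c)) := by
    rw [hom_d_apply, total_d_lof rfl, total_sign_lof, Units.smul_def, map_zsmul, hφ, smul_zero,
      map_zero, sub_zero]
  refine acyclic_of_filtration _ (fun n ↦ {φ | ∀ i > b - n, ∀ c, φ (lof i c) = 0})
    (b - a + 1).toNat ?_ ?_ ?_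
  · refine Set.eq_univ_of_forall fun φ i hi c ↦ ?_
    have := hx i (.inr (by simpa using hi))
    rw [Subsingleton.elim c 0, map_zero, map_zero]
  · refine fun φ hφ ↦ DirectSum.linearMap_ext R fun i ↦ LinearMap.ext fun c ↦ ?_
    by_cases hi : i < a
    · have := hx i (.inl hi)
      rw [Subsingleton.elim c 0, map_zero, map_zero]
    · exact hφ i (by omega) c
  · intro n φ hφ hdφ
    obtain ⟨ψ, hψ⟩ := exists_comp_eq_of_mem_range l.d (φ ∘ₗ lof (b - n)) fun c ↦ hl _ <| by
      rw [LinearMap.comp_apply, ← hom_d_lof φ _ (hφ _ (by omega)), hdφ, LinearMap.zero_apply]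
    have hlof (i : ℤ) (hi : i > b - n) (c : x.X i) : ψ (comp (b - n) (lof i c)) = 0 := by
      rw [DirectSum.component.of, dif_neg (by omega), map_zero]
    refine ⟨ψ ∘ₗ comp (b - n), fun i hi c ↦ ?_⟩
    rw [LinearMap.sub_apply, hom_d_lof _ i (hlof (i + 1) (by push_cast at hi; omega))]
    obtain hi | rfl : i > b - n ∨ i = b - n := by push_cast at hi; omega
    · rw [hφ i hi, LinearMap.comp_apply, hlof i hi, map_zero, sub_zero]
    · rw [LinearMap.comp_apply, DirectSum.component.lof_self, hψ, LinearMap.comp_apply, sub_self]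

end SignedComplex

/-- A quasi-isomorphism `ev` from `W` to `R` placed in degree zero, together with a cycle `z`
representing the unit. -/
structure UnitQuasiIso {R M : Type*} [CommRing R] [AddCommGroup M] [Module R M]
    (W : SignedComplex R M) where
  ev : M →ₗ[R] R
  z : M
  ev_d : ∀ w, ev (W.d w) = 0
  ev_sign : ∀ w, ev (W.sign w) = ev w
  d_z : W.d z = 0
  sign_z : W.sign z = z
  ev_z : ev z = 1
  exact : ∀ w, W.d w = 0 → ev w = 0 → ∃ v, W.d v = w

namespace UnitQuasiIso

open SignedComplex

section Kernel

variable {R M : Type*} [CommRing R] [AddCommGroup M] [Module R M] {W : SignedComplex R M}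
  (P : UnitQuasiIso W)

/-- The kernel of the augmentation. It is a type synonym because instance search fails
on hom modules into tensor products of the coerced submodule. -/
def Kernel : Type _ := LinearMap.ker P.ev

instance : AddCommGroup P.Kernel := inferInstanceAs (AddCommGroup (LinearMap.ker P.ev))

instance : Module R P.Kernel := inferInstanceAs (Module R (LinearMap.ker P.ev))

/-- The inclusion of the kernel of the augmentation. -/
def incl : P.Kernel →ₗ[R] M := (LinearMap.ker P.ev).subtype

/-- The kernel of the augmentation, as a subcomplex. -/
def kernel : SignedComplex R P.Kernel where
  d := W.d.restrict fun w _ ↦ P.ev_d w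
  sign := W.sign.restrict fun w hw ↦ (P.ev_sign w).trans hw
  d_d w := Subtype.ext (W.d_d w.1)
  sign_sign w := Subtype.ext (W.sign_sign w.1)
  sign_d w := Subtype.ext (W.sign_d w.1)

lemma isHom_incl : IsHom P.kernel W P.incl := ⟨fun _ ↦ rfl, fun _ ↦ rfl⟩

lemma acyclic_kernel : P.kernel.Acyclic := by
  intro w hw
  obtain ⟨v, hv⟩ := P.exact w.1 (congrArg P.incl hw) w.2
  refine ⟨⟨v - P.ev v • P.z, by simp [P.ev_z]⟩, Subtype.ext ?_⟩
  change W.d (v - P.ev v • P.z) = w.1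
  rw [map_sub, map_smul, P.d_z, smul_zero, sub_zero, hv]

/-- The retraction `w ↦ w - ev w • z` of `W` onto the kernel of the augmentation. -/
def retract : M →ₗ[R] P.Kernel :=
  (LinearMap.id - P.ev.smulRight P.z).codRestrict _ fun w ↦ by simp [P.ev_z]

lemma incl_retract (w : M) : P.incl (P.retract w) = w - P.ev w • P.z := rfl

lemma isHom_retract : IsHom W P.kernel P.retract where
  map_d w := Subtype.ext <| by
    change W.d w - P.ev (W.d w) • P.z = W.d (w - P.ev w • P.z)
    simp [P.ev_d, P.d_z]
  map_sign w := Subtype.ext <| by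
    change W.sign w - P.ev (W.sign w) • P.z = W.sign (w - P.ev w • P.z)
    simp [P.ev_sign, P.sign_z]

end Kernel

end UnitQuasiIso

namespace SignedComplex

variable {R A B C : Type*} [CommRing R] [AddCommGroup A] [Module R A] [AddCommGroup B] [Module R B]
  [AddCommGroup C] [Module R C] {X : SignedComplex R A} {Y : SignedComplex R B}
  {Z : SignedComplex R C}

lemma IsHom.comp {g : B →ₗ[R] C} {f : A →ₗ[R] B} (hg : IsHom Y Z g) (hf : IsHom X Y f) :
    IsHom X Z (g ∘ₗ f) where
  map_d a := by simp [hf.map_d, hg.map_d]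
  map_sign a := by simp [hf.map_sign, hg.map_sign]

lemma IsHom.rTensor {f : A →ₗ[R] B} (hf : IsHom X Y f) (Z : SignedComplex R C) :
    IsHom (X.tensor Z) (Y.tensor Z) (f.rTensor C) where
  map_d t := by
    induction t with
    | zero => simp
    | tmul a c => simp [hf.map_d, hf.map_sign]
    | add t u ht hu => simp only [map_add, ht, hu]
  map_sign t := by
    induction t with
    | zero => simp
    | tmul a c => simp [hf.map_sign]
    | add t u ht hu => simp only [map_add, ht, hu]

lemma isHom_mk_flip {b : B} (hd : Y.d b = 0) (hs : Y.sign b = b) :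
    IsHom X (X.tensor Y) ((TensorProduct.mk R A B).flip b) where
  map_d a := by simp [hd]
  map_sign a := by simp [hs]

lemma isHom_assoc : IsHom ((X.tensor Y).tensor Z) (X.tensor (Y.tensor Z))
    (TensorProduct.assoc R A B C).toLinearMap where
  map_d t := by
    have : (TensorProduct.assoc R A B C).toLinearMap ∘ₗ ((X.tensor Y).tensor Z).d =
        (X.tensor (Y.tensor Z)).d ∘ₗ (TensorProduct.assoc R A B C).toLinearMap :=
      TensorProduct.ext_threefold fun a b c ↦ by
        simp [TensorProduct.add_tmul, TensorProduct.tmul_add, add_assoc]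
    exact LinearMap.congr_fun this t
  map_sign t := by
    have : (TensorProduct.assoc R A B C).toLinearMap ∘ₗ ((X.tensor Y).tensor Z).sign =
        (X.tensor (Y.tensor Z)).sign ∘ₗ (TensorProduct.assoc R A B C).toLinearMap :=
      TensorProduct.ext_threefold fun a b c ↦ by simp
    exact LinearMap.congr_fun this t

lemma IsHom.symm {e : A ≃ₗ[R] B} (he : IsHom X Y e.toLinearMap) :
    IsHom Y X e.symm.toLinearMap where
  map_d b := e.injective <| by simpa using (he.map_d (e.symm b)).symm
  map_sign b := e.injective <| by simpa using (he.map_sign (e.symm b)).symm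

end SignedComplex

namespace UnitQuasiIso

open SignedComplex

variable {R M N : Type*} [CommRing R] [AddCommGroup M] [Module R M] [AddCommGroup N] [Module R N]
  {X : SignedComplex R M} {Y : SignedComplex R N} (P : UnitQuasiIso (X.tensor Y))

/-- The cycle of `Y ⊗ X` corresponding to `P.z` under the signed symmetry. -/
noncomputable def coev : N ⊗[R] M := TensorProduct.comm R M N (X.sign.rTensor N P.z)

-- On tensors of even degree the Koszul sign `(-1) ^ (|m| * |n|)` of the symmetry is `(-1) ^ |m|`.
lemma tensor_d_comm_rTensor_sign (t : M ⊗[R] N) :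
    (Y.tensor X).d (TensorProduct.comm R M N (X.sign.rTensor N t)) =
      TensorProduct.comm R M N
        ((X.tensor Y).d t + X.d.rTensor N ((X.tensor Y).sign t - t)) := by
  induction t with
  | zero => simp
  | tmul m n =>
    simp only [LinearMap.rTensor_tmul, TensorProduct.comm_tmul, tensor_d_tmul, tensor_sign_tmul,
      map_sub, map_add]
    abel
  | add t u ht hu => simp only [map_add, ht, hu, map_sub]; abel

lemma d_coev : (Y.tensor X).d P.coev = 0 := by
  rw [coev, tensor_d_comm_rTensor_sign, P.d_z, P.sign_z, sub_self, map_zero, add_zero, map_zero]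

lemma tensor_sign_comm_rTensor_sign (t : M ⊗[R] N) :
    (Y.tensor X).sign (TensorProduct.comm R M N (X.sign.rTensor N t)) =
      TensorProduct.comm R M N (X.sign.rTensor N ((X.tensor Y).sign t)) := by
  induction t with
  | zero => simp
  | tmul m n => simp
  | add t u ht hu => simp only [map_add, ht, hu]

lemma sign_coev : (Y.tensor X).sign P.coev = P.coev := by
  rw [coev, tensor_sign_comm_rTensor_sign, P.sign_z]

/-- Tensoring with the coevaluation, `a ↦ a ⊗ coev`, as a map `X → (X ⊗ Y) ⊗ X`. -/
noncomputable def tensorCoev : M →ₗ[R] (M ⊗[R] N) ⊗[R] M :=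
  (TensorProduct.assoc R M N M).symm.toLinearMap ∘ₗ (TensorProduct.mk R M (N ⊗[R] M)).flip P.coev

lemma isHom_tensorCoev : IsHom X ((X.tensor Y).tensor X) P.tensorCoev :=
  isHom_assoc.symm.comp (isHom_mk_flip P.d_coev P.sign_coev)

end UnitQuasiIso

lemma apply_mem_of_mem_range_sup {R A B : Type*} [CommRing R] [AddCommGroup A] [Module R A]
    [AddCommGroup B] [Module R B] {f : A →ₗ[R] B} {μ : B →ₗ[R] R} {I : Ideal R}
    (hμ : ∀ a, μ (f a) ∈ I) {b : B} (hb : b ∈ f.range ⊔ I • ⊤) : μ b ∈ I := by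
  refine (sup_le ?_ ?_ : _ ≤ Submodule.comap μ I) hb
  · rintro _ ⟨a, rfl⟩
    exact hμ a
  · simpa using Submodule.smul_top_le_comap_smul_top I μ

namespace UnitQuasiIso

open SignedComplex

variable {R M N : Type*} [CommRing R] [AddCommGroup M] [Module R M] [AddCommGroup N] [Module R N]
  {X : SignedComplex R M} {Y : SignedComplex R N} (P : UnitQuasiIso (X.tensor Y))

/-- Contraction of the second tensor factor against a vector, `slice c (m ⊗ n) = ev (c ⊗ n) • m`. -/
noncomputable def slice : M →ₗ[R] M ⊗[R] N →ₗ[R] M :=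
  LinearMap.compRight R (TensorProduct.rid R M).toLinearMap ∘ₗ LinearMap.lTensorHom M ∘ₗ
    TensorProduct.curry P.ev

@[simp]
lemma slice_tmul (c m : M) (n : N) : P.slice c (m ⊗ₜ n) = P.ev (c ⊗ₜ n) • m := by
  simp [slice]

lemma slice_tensor_d (c : M) (t : M ⊗[R] N) :
    P.slice c ((X.tensor Y).d t) =
      X.d (P.slice c t) + P.slice (X.d c) ((X.tensor Y).sign t) := by
  induction t with
  | zero => simp
  | tmul m n =>
    have : P.ev (c ⊗ₜ Y.d n) = P.ev (X.d c ⊗ₜ Y.sign n) := by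
      have h := P.ev_d (X.sign c ⊗ₜ n)
      rw [tensor_d_tmul, X.sign_sign, map_add] at h
      have h' := P.ev_sign (X.d c ⊗ₜ Y.sign n)
      rw [tensor_sign_tmul, Y.sign_sign, X.sign_d, TensorProduct.neg_tmul, map_neg] at h'
      rw [← h', eq_neg_iff_add_eq_zero, add_comm, h]
    simp [this]
  | add t u ht hu => simp only [map_add, ht, hu]; abel

/-- The value on `a` of the composite `X ≅ X ⊗ 1 → X ⊗ (Y ⊗ X) ≅ (X ⊗ Y) ⊗ X → 1 ⊗ X ≅ X` of the
triangle identity, up to the sign of `a`. -/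
noncomputable def twist : M →ₗ[R] M := P.slice.flip P.z

lemma d_twist (a : M) : X.d (P.twist a) = -P.twist (X.d a) := by
  have h := P.slice_tensor_d a P.z
  rw [P.d_z, map_zero, P.sign_z] at h
  exact eq_neg_of_add_eq_zero_left h.symm

/-- The trace of an endomorphism of `X` computed from the duality between `X` and `Y`. -/
noncomputable def trace : Module.End R M →ₗ[R] R :=
  P.ev ∘ₗ LinearMap.applyₗ P.z ∘ₗ LinearMap.rTensorHom N

lemma trace_apply (θ : Module.End R M) : P.trace θ = P.ev (θ.rTensor N P.z) := rfl

/-- The map `(X ⊗ Y) ⊗ X → X` contracting `Y` against the image of the last factor under `θ`. -/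
noncomputable def contract (θ : M →ₗ[R] M) : (M ⊗[R] N) ⊗[R] M →ₗ[R] M :=
  TensorProduct.lift (P.slice ∘ₗ θ ∘ₗ X.sign).flip

@[simp]
lemma contract_tmul (θ : M →ₗ[R] M) (t : M ⊗[R] N) (m : M) :
    P.contract θ (t ⊗ₜ m) = P.slice (θ (X.sign m)) t := by
  simp [contract]

lemma contract_tensorCoev (θ : M →ₗ[R] M) (a : M) :
    P.contract θ (P.tensorCoev a) = P.trace θ • a := by
  suffices h : ∀ t, P.contract θ ((TensorProduct.assoc R M N M).symm
      (a ⊗ₜ TensorProduct.comm R M N (X.sign.rTensor N t))) = P.ev (θ.rTensor N t) • a from h P.z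
  intro t
  induction t with
  | zero => simp
  | tmul m n => simp [X.sign_sign]
  | add t u ht hu => simp only [map_add, TensorProduct.tmul_add, ht, hu, add_smul]

lemma contract_tensor_d (θ : M →ₗ[R] M) (t : (M ⊗[R] N) ⊗[R] M) :
    P.contract θ (((X.tensor Y).tensor X).d t) = X.d (P.contract θ t) +
      P.contract (X.d ∘ₗ θ - θ ∘ₗ X.d) ((X.tensor Y).sign.rTensor M t) := by
  induction t with
  | zero => simp
  | tmul w m =>
    simp only [tensor_d_tmul, map_add, contract_tmul, slice_tensor_d, X.sign_d, map_neg,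
      LinearMap.neg_apply, LinearMap.rTensor_tmul, LinearMap.sub_apply, LinearMap.coe_comp,
      Function.comp_apply, map_sub]
    abel
  | add t u ht hu => simp only [map_add, ht, hu]; abel

lemma contract_mem_smul_top {I : Ideal R} {θ : M →ₗ[R] M}
    (hθ : ∀ m, θ m ∈ I • (⊤ : Submodule R M)) (t : (M ⊗[R] N) ⊗[R] M) :
    P.contract θ t ∈ I • (⊤ : Submodule R M) := by
  induction t with
  | zero => simp
  | tmul w m =>
    rw [contract_tmul]
    exact Submodule.smul_top_le_comap_smul_top I (P.slice.flip w) (hθ _)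
  | add t u ht hu =>
    rw [map_add]
    exact add_mem ht hu

lemma lid_rTensor_ev_tensorCoev (a : M) :
    TensorProduct.lid R M (P.ev.rTensor M (P.tensorCoev a)) = X.sign (P.twist a) := by
  suffices h : ∀ t, TensorProduct.lid R M (P.ev.rTensor M ((TensorProduct.assoc R M N M).symm
      (a ⊗ₜ TensorProduct.comm R M N (X.sign.rTensor N t)))) = X.sign (P.slice a t) from h P.z
  intro t
  induction t with
  | zero => simp
  | tmul m n => simp
  | add t u ht hu => simp only [map_add, TensorProduct.tmul_add, ht, hu]

lemma rTensor_retract (t : (M ⊗[R] N) ⊗[R] M) :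
    P.incl.rTensor M (P.retract.rTensor M t) =
      t - P.z ⊗ₜ TensorProduct.lid R M (P.ev.rTensor M t) := by
  induction t with
  | zero => simp
  | tmul w m => simp [incl_retract, TensorProduct.sub_tmul, TensorProduct.smul_tmul]
  | add t u ht hu => simp only [map_add, TensorProduct.tmul_add, ht, hu]; abel

-- The two maps agree after `ev ⊗ 1`, so their difference factors through `ker ev ⊗ X`.
lemma exists_homotopy_tensorCoev (hX : (X.hom (P.kernel.tensor X)).Acyclic) :
    ∃ s s' : M →ₗ[R] (M ⊗[R] N) ⊗[R] M, ∀ a,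
      P.tensorCoev a - P.z ⊗ₜ X.sign (P.twist a) =
        ((X.tensor Y).tensor X).d (s a) + s' (X.d a) := by
  obtain ⟨h, hh⟩ := hX _ ((P.isHom_retract.rTensor X).comp P.isHom_tensorCoev).hom_d_eq_zero
  refine ⟨P.incl.rTensor M ∘ₗ h,
    -(P.incl.rTensor M ∘ₗ (P.kernel.tensor X).sign ∘ₗ h ∘ₗ X.sign), fun a ↦ ?_⟩
  have := congrArg (P.incl.rTensor M) (LinearMap.congr_fun hh a)
  rw [LinearMap.comp_apply, rTensor_retract, lid_rTensor_ev_tensorCoev, hom_d_apply, map_sub,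
    (P.isHom_incl.rTensor X).map_d] at this
  rw [← this]
  simp [sub_eq_add_neg]

theorem trace_smul_sub_twist_mem (hX : (X.hom (P.kernel.tensor X)).Acyclic) {I : Ideal R}
    {θ : M →ₗ[R] M}
    (hθ : ∀ m, X.d (θ m) - θ (X.d m) ∈ I • (⊤ : Submodule R M)) {a : M}
    (ha : X.d a ∈ I • (⊤ : Submodule R M)) :
    P.trace θ • a - P.twist (θ (P.twist a)) ∈ X.d.range ⊔ I • ⊤ := by
  obtain ⟨s, s', hs⟩ := P.exists_homotopy_tensorCoev hX
  have h := congrArg (P.contract θ) (hs a)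
  rw [map_sub, contract_tensorCoev, contract_tmul, X.sign_sign, map_add, contract_tensor_d,
    add_assoc] at h
  change P.trace θ • a - P.twist (θ (P.twist a)) = _ at h
  rw [h]
  exact Submodule.add_mem_sup ⟨_, rfl⟩ (add_mem (P.contract_mem_smul_top hθ _)
    (Submodule.smul_top_le_comap_smul_top I (P.contract θ ∘ₗ s') ha))

lemma trace_id : P.trace .id = 1 := by
  rw [trace_apply, LinearMap.rTensor_id, LinearMap.id_apply, P.ev_z]

lemma trace_smulRight (μ : M →ₗ[R] R) (c : M) : P.trace (μ.smulRight c) = μ (P.twist c) := by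
  suffices h : ∀ t, P.ev ((μ.smulRight c).rTensor N t) = μ (P.slice c t) from h P.z
  intro t
  induction t with
  | zero => simp
  | tmul m n => simp [← TensorProduct.smul_tmul', mul_comm]
  | add t u ht hu => simp only [map_add, ht, hu]

lemma trace_mem {I : Ideal R} {θ : M →ₗ[R] M} (hθ : ∀ m, θ m ∈ I • (⊤ : Submodule R M)) :
    P.trace θ ∈ I := by
  suffices h : ∀ t, P.ev (θ.rTensor N t) ∈ I from h P.z
  intro t
  induction t with
  | zero => simp
  | tmul m n =>
    have := Submodule.smul_top_le_comap_smul_top I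
      (P.ev ∘ₗ (TensorProduct.mk R M N).flip n) (hθ m)
    simpa using this
  | add t u ht hu =>
    rw [map_add, map_add]
    exact add_mem ht hu

lemma tensor_d_rTensor {h : M →ₗ[R] M} (hh : ∀ m, X.sign (h m) = -h (X.sign m)) (t : M ⊗[R] N) :
    (X.tensor Y).d (h.rTensor N t) =
      (X.d ∘ₗ h + h ∘ₗ X.d).rTensor N t - h.rTensor N ((X.tensor Y).d t) := by
  induction t with
  | zero => simp
  | tmul m n =>
    simp only [LinearMap.rTensor_tmul, tensor_d_tmul, map_add, LinearMap.rTensor_add,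
      LinearMap.add_apply, LinearMap.comp_apply, hh, TensorProduct.neg_tmul]
    abel
  | add t u ht hu => simp only [map_add, ht, hu]; abel

lemma trace_anticommutator_d {h : M →ₗ[R] M} (hh : ∀ m, X.sign (h m) = -h (X.sign m)) :
    P.trace (X.d ∘ₗ h + h ∘ₗ X.d) = 0 := by
  have := P.ev_d (h.rTensor N P.z)
  rwa [tensor_d_rTensor hh, P.d_z, map_zero, sub_zero] at this

lemma sub_twist_twist_mem (hX : (X.hom (P.kernel.tensor X)).Acyclic) {I : Ideal R} {a : M}
    (ha : X.d a ∈ I • (⊤ : Submodule R M)) :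
    a - P.twist (P.twist a) ∈ X.d.range ⊔ I • ⊤ := by
  simpa [trace_id] using P.trace_smul_sub_twist_mem hX (θ := .id) (I := I) (by simp) ha

theorem smul_sub_smul_twist_mem (hX : (X.hom (P.kernel.tensor X)).Acyclic) {I : Ideal R}
    {μ : M →ₗ[R] R}
    (hμ : ∀ m, μ (X.d m) ∈ I) {a c : M} (ha : X.d a ∈ I • (⊤ : Submodule R M))
    (hc : X.d c ∈ I • (⊤ : Submodule R M)) :
    μ c • a - μ (P.twist a) • c ∈ X.d.range ⊔ I • ⊤ := by
  have hτc : X.d (P.twist c) ∈ I • (⊤ : Submodule R M) := by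
    rw [d_twist]
    exact neg_mem (Submodule.smul_top_le_comap_smul_top I P.twist hc)
  have hcc := P.sub_twist_twist_mem hX hc
  have hμcc : μ (c - P.twist (P.twist c)) ∈ I := apply_mem_of_mem_range_sup hμ hcc
  have key := P.trace_smul_sub_twist_mem hX (I := I) (θ := μ.smulRight (P.twist c)) (fun m ↦ by
    simpa using sub_mem (Submodule.smul_mem _ (μ m) hτc)
      (Submodule.smul_mem_smul (hμ m) Submodule.mem_top)) ha
  rw [trace_smulRight, LinearMap.smulRight_apply, map_smul] at key
  have hμcc' := Submodule.mem_sup_right (S := X.d.range)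
    (Submodule.smul_mem_smul hμcc (Submodule.mem_top (x := a)))
  have := sub_mem (add_mem key hμcc') (Submodule.smul_mem _ (μ (P.twist a)) hcc)
  convert this using 1
  rw [map_sub, sub_smul, smul_sub]
  abel

end UnitQuasiIso

section MaximalIdeal

variable {R : Type*} [CommRing R] {m : Ideal R} {A B C : Type*} [AddCommGroup A] [Module R A]
  [AddCommGroup B] [Module R B] [AddCommGroup C] [Module R C]

lemma exists_dual_apply_notMem [m.IsMaximal] [Module.Projective R B] {N : Submodule R B}
    (hN : m • ⊤ ≤ N) {b : B} (hb : b ∉ N) : ∃ l : B →ₗ[R] R, (∀ x ∈ N, l x ∈ m) ∧ l b ∉ m := by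
  let := Ideal.Quotient.field m
  have ht : Module.IsTorsionBySet R (B ⧸ N) (m : Set R) := by
    intro x r
    obtain ⟨x, rfl⟩ := N.mkQ_surjective x
    rw [← map_smul, Submodule.mkQ_apply, Submodule.Quotient.mk_eq_zero]
    exact hN (Submodule.smul_mem_smul r.2 trivial)
  let : Module (R ⧸ m) (B ⧸ N) := ht.module
  have : IsScalarTower R (R ⧸ m) (B ⧸ N) := ht.isScalarTower
  obtain ⟨g, hg⟩ : ∃ g : Module.Dual (R ⧸ m) (B ⧸ N), g (N.mkQ b) ≠ 0 := by
    by_contra! h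
    exact hb ((Submodule.Quotient.mk_eq_zero N).mp
      ((Module.forall_dual_apply_eq_zero_iff (R ⧸ m) _).mp h))
  obtain ⟨l, hl⟩ := Module.projective_lifting_property m.mkQ (g.restrictScalars R ∘ₗ N.mkQ)
    m.mkQ_surjective
  have mk_l (x : B) : Ideal.Quotient.mk m (l x) = g (N.mkQ x) := LinearMap.congr_fun hl x
  refine ⟨l, fun x hx ↦ ?_, ?_⟩
  · rw [← Ideal.Quotient.eq_zero_iff_mem, mk_l, Submodule.mkQ_apply,
      (Submodule.Quotient.mk_eq_zero N).mpr hx, map_zero]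
  · rwa [← Ideal.Quotient.eq_zero_iff_mem, mk_l]

lemma exists_apply_apply_apply_eq {k V W : Type*} [DivisionRing k] [AddCommGroup V] [Module k V]
    [AddCommGroup W] [Module k W] (f : V →ₗ[k] W) : ∃ s : W →ₗ[k] V, ∀ v, f (s (f v)) = f v := by
  obtain ⟨t, ht⟩ := f.rangeRestrict.exists_rightInverse_of_surjective f.range_rangeRestrict
  obtain ⟨q, hq⟩ := f.range.subtype.exists_leftInverse_of_injective f.range.ker_subtype
  refine ⟨t ∘ₗ q, fun v ↦ ?_⟩
  have h : q (f v) = f.rangeRestrict v := LinearMap.congr_fun hq (f.rangeRestrict v)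
  rw [LinearMap.comp_apply, h]
  exact congrArg Subtype.val (LinearMap.congr_fun ht (f.rangeRestrict v))

lemma exists_apply_apply_apply_sub_mem_smul_top [m.IsMaximal] [Module.Projective R B]
    (f : A →ₗ[R] B) : ∃ s : B →ₗ[R] A, ∀ a, f (s (f a)) - f a ∈ m • (⊤ : Submodule R B) := by
  let := Ideal.Quotient.field m
  let fm := (m • ⊤ : Submodule R A).mapQ (m • ⊤) f (Submodule.smul_top_le_comap_smul_top m f)
  obtain ⟨t, ht⟩ := exists_apply_apply_apply_eq
    (fm.extendScalarsOfSurjective (S := R ⧸ m) Ideal.Quotient.mk_surjective)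
  obtain ⟨s, hs⟩ := Module.projective_lifting_property (m • ⊤ : Submodule R A).mkQ
    (t.restrictScalars R ∘ₗ (m • ⊤ : Submodule R B).mkQ) (Submodule.mkQ_surjective _)
  refine ⟨s, fun a ↦ (Submodule.Quotient.eq _).mp ?_⟩
  have hsa : Submodule.Quotient.mk (s (f a)) = t (Submodule.Quotient.mk (f a)) :=
    LinearMap.congr_fun hs (f a)
  exact (congrArg fm hsa).trans (ht (Submodule.Quotient.mk a))

variable {f : A →ₗ[R] B} {g : B →ₗ[R] C}

lemma sub_homotopy_mem_smul_top
    (h : ∀ b, g b ∈ m • (⊤ : Submodule R C) → b ∈ f.range ⊔ m • ⊤) {s : B →ₗ[R] A} {t : C →ₗ[R] B}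
    (hs : ∀ a, f (s (f a)) - f a ∈ m • (⊤ : Submodule R B))
    (ht : ∀ b, g (t (g b)) - g b ∈ m • (⊤ : Submodule R C)) (b : B) :
    b - (f (s (b - t (g b))) + t (g b)) ∈ m • (⊤ : Submodule R B) := by
  have hb : g (b - t (g b)) ∈ m • (⊤ : Submodule R C) := by
    rw [map_sub, ← neg_sub]
    exact neg_mem (ht b)
  obtain ⟨_, ⟨a, rfl⟩, u, hu, hau⟩ := Submodule.mem_sup.mp (h _ hb)
  have hfsu := Submodule.smul_top_le_comap_smul_top m (f ∘ₗ s) hu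
  convert sub_mem hu (add_mem (hs a) hfsu) using 1
  rw [← sub_sub, sub_right_comm, ← hau, map_add, map_add, LinearMap.comp_apply]
  abel

open Polynomial in
lemma exists_aeval_sub_apply_aeval_eq_smul [m.IsPrime] [Module.Finite R B] {φ : Module.End R B}
    (hφ : ∀ b, φ b ∈ m • (⊤ : Submodule R B)) :
    ∃ r ∉ m, ∃ q : R[X], ∀ b, aeval φ q b - φ (aeval φ q b) = r • b := by
  obtain ⟨p, hp, -, hcoeff, hpφ⟩ :=
    LinearMap.exists_monic_and_natDegree_eq_and_coeff_mem_pow_and_aeval_eq_zero R φ m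
      (by rintro _ ⟨b, rfl⟩; exact hφ b)
  refine ⟨p.eval 1, fun h ↦ ?_, p /ₘ (X - C 1), fun b ↦ ?_⟩
  · rw [eval_eq_sum_range, Finset.sum_range_succ, one_pow, mul_one, hp.coeff_natDegree] at h
    refine (Ideal.ne_top_iff_one m).mp ‹m.IsPrime›.ne_top ((Submodule.add_mem_iff_right m ?_).mp h)
    refine sum_mem fun k hk ↦ ?_
    rw [one_pow, mul_one]
    exact Ideal.pow_le_self (Nat.sub_ne_zero_of_lt (Finset.mem_range.mp hk)) (hcoeff k)
  · have := LinearMap.congr_fun (congrArg (aeval φ)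
      (X_sub_C_mul_divByMonic_eq_sub_modByMonic p 1)) b
    simp only [modByMonic_X_sub_C_eq_C_eval, map_mul, map_sub, aeval_X, aeval_C, hpφ,
      Module.End.mul_apply, LinearMap.sub_apply, zero_sub, LinearMap.neg_apply,
      Module.algebraMap_end_apply, one_smul] at this
    rw [← neg_sub, this, neg_neg]

open Polynomial in
lemma map_aeval_apply_eq_aeval_apply_map {φ : Module.End R B} {ψ : Module.End R C}
    (h : ∀ b, g (φ b) = ψ (g b)) (q : R[X]) (b : B) : g (aeval φ q b) = aeval ψ q (g b) := by
  induction q using Polynomial.induction_on generalizing b with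
  | C r => simp
  | add p q hp hq => simp [hp, hq]
  | monomial n r ih =>
    simp only [pow_succ, ← mul_assoc, map_mul, aeval_X, Module.End.mul_apply] at ih ⊢
    rw [ih, h]

section Finite

variable [m.IsMaximal] [Module.Finite R B] [Module.Projective R B] [Module.Projective R C]

-- Cayley–Hamilton turns a contracting homotopy modulo `m` into one up to a scalar outside `m`.
lemma exists_homotopy_smul (hgf : ∀ a, g (f a) = 0)
    (h : ∀ b, g b ∈ m • (⊤ : Submodule R C) → b ∈ f.range ⊔ m • ⊤) :
    ∃ r ∉ m, ∃ (s : B →ₗ[R] A) (t : C →ₗ[R] B) (θ : Module.End R B) (η : Module.End R C),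
      (∀ b, g (θ b) = η (g b)) ∧ ∀ b, f (s (θ b)) + t (g (θ b)) = r • b := by
  obtain ⟨s, hs⟩ := exists_apply_apply_apply_sub_mem_smul_top (m := m) f
  obtain ⟨t, ht⟩ := exists_apply_apply_apply_sub_mem_smul_top (m := m) g
  let φ : Module.End R B := .id - (f ∘ₗ s ∘ₗ (.id - t ∘ₗ g) + t ∘ₗ g)
  let ψ : Module.End R C := .id - g ∘ₗ t
  obtain ⟨r, hr, q, hq⟩ := exists_aeval_sub_apply_aeval_eq_smul (φ := φ)
    (sub_homotopy_mem_smul_top h hs ht)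
  have hgφ (b : B) : g (φ b) = ψ (g b) := by simp [φ, ψ, hgf]
  refine ⟨r, hr, s ∘ₗ (.id - t ∘ₗ g), t, Polynomial.aeval φ q, Polynomial.aeval ψ q,
    map_aeval_apply_eq_aeval_apply_map hgφ q, fun b ↦ ?_⟩
  rw [← hq b]
  simp [φ]

lemma exists_map_smul_add_eq_zero (hgf : ∀ a, g (f a) = 0)
    (h : ∀ b, g b ∈ m • (⊤ : Submodule R C) → b ∈ f.range ⊔ m • ⊤) {a : A}
    (ha : f a ∈ m • (⊤ : Submodule R B)) :
    ∃ r ∉ m, ∃ u ∈ m • (⊤ : Submodule R A), f (r • a + u) = 0 := by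
  obtain ⟨r, hr, s, t, θ, η, hη, hst⟩ := exists_homotopy_smul hgf h
  refine ⟨r, hr, -s (θ (f a)),
    neg_mem (Submodule.smul_top_le_comap_smul_top m (s ∘ₗ θ) ha), ?_⟩
  rw [map_add, map_neg, map_smul, ← hst, hη, hgf, map_zero, map_zero, add_zero, add_neg_cancel]

lemma exists_smul_add_comp_eq_zero (hgf : ∀ a, g (f a) = 0)
    (h : ∀ b, g b ∈ m • (⊤ : Submodule R C) → b ∈ f.range ⊔ m • ⊤) {l : C →ₗ[R] R}
    (hl : ∀ b, l (g b) ∈ m) :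
    ∃ r ∉ m, ∃ u : C →ₗ[R] R, (∀ c, u c ∈ m) ∧ ∀ b, (r • l + u) (g b) = 0 := by
  obtain ⟨r, hr, s, t, θ, η, hη, hst⟩ := exists_homotopy_smul hgf h
  refine ⟨r, hr, -(l ∘ₗ g ∘ₗ t ∘ₗ η), fun c ↦ neg_mem (hl _), fun b ↦ ?_⟩
  have := congrArg (l ∘ₗ g) (hst b)
  simp only [map_add, map_smul, LinearMap.comp_apply, hgf, map_zero, zero_add, hη] at this
  simp [this]

end Finite

end MaximalIdeal

lemma hom_d_hom_d_apply {R : Type*} [CommRing R] (x : CochainComplex (ModuleCat R) ℤ) (i j k : ℤ)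
    (a : x.X i) : (x.d j k).hom ((x.d i j).hom a) = 0 := by
  rw [← ModuleCat.comp_apply, x.d_comp_d]
  rfl

section ExactModAt

variable {R : Type*} [CommRing R] {x : CochainComplex (ModuleCat R) ℤ} {I : Ideal R} {i j k : ℤ}

/-- Exactness of `x ⊗ R/I` in degree `j`, in terms of the elements of `x.X j`. -/
def ExactModAt (x : CochainComplex (ModuleCat R) ℤ) (I : Ideal R) (j : ℤ) : Prop :=
  ∀ a : x.X j, (x.d j (j + 1)).hom a ∈ I • (⊤ : Submodule R (x.X (j + 1))) →
    a ∈ (x.d (j - 1) j).hom.range ⊔ I • ⊤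

lemma ExactModAt.mem_sup (h : ExactModAt x I j) (hi : i + 1 = j) (hk : j + 1 = k) (a : x.X j)
    (ha : (x.d j k).hom a ∈ I • (⊤ : Submodule R (x.X k))) : a ∈ (x.d i j).hom.range ⊔ I • ⊤ := by
  obtain rfl : i = j - 1 := eq_sub_of_add_eq hi
  subst hk
  exact h a ha

lemma exists_of_not_exactModAt {m : Ideal R} [m.IsMaximal] [Module.Projective R (x.X j)]
    (h : ¬ExactModAt x m j) :
    ∃ a : x.X j, (x.d j (j + 1)).hom a ∈ m • (⊤ : Submodule R (x.X (j + 1))) ∧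
      ∃ l : x.X j →ₗ[R] R, (∀ b, l ((x.d (j - 1) j).hom b) ∈ m) ∧ l a ∉ m := by
  simp only [ExactModAt, not_forall] at h
  obtain ⟨a, hda, ha⟩ := h
  obtain ⟨l, hl, hla⟩ := exists_dual_apply_notMem le_sup_right ha
  exact ⟨a, hda, l, fun b ↦ hl _ (Submodule.mem_sup_left ⟨b, rfl⟩), hla⟩

end ExactModAt

namespace SignedComplex

open scoped DirectSum

variable {R : Type*} [CommRing R] {x : CochainComplex (ModuleCat R) ℤ}

lemma exists_contraction_of_exactModAt {m : Ideal R} [m.IsMaximal]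
    [∀ i, Module.Projective R (x.X i)] (hx : ∀ j, ExactModAt x m j) :
    ∃ h : Module.End R (⨁ i, x.X i), (∀ v, (total x).sign (h v) = -h ((total x).sign v)) ∧
      ∀ v, v - ((total x).d (h v) + h ((total x).d v)) ∈ m • (⊤ : Submodule R (⨁ i, x.X i)) := by
  choose s hs using fun i j ↦ exists_apply_apply_apply_sub_mem_smul_top (m := m) (x.d i j).hom
  let lof (i : ℤ) := DirectSum.lof R ℤ (fun i ↦ x.X i) i
  let h : Module.End R (⨁ i, x.X i) := DirectSum.toModule R ℤ _ fun i ↦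
    lof (i - 1) ∘ₗ s (i - 1) i ∘ₗ (.id - s i (i + 1) ∘ₗ (x.d i (i + 1)).hom)
  have h_lof {i j k : ℤ} (hij : i + 1 = j) (hjk : j + 1 = k) (b : x.X j) :
      h (lof j b) = lof i (s i j (b - s j k ((x.d j k).hom b))) := by
    obtain rfl : i = j - 1 := eq_sub_of_add_eq hij
    subst hjk
    simp [h, lof]
  refine ⟨h, fun v ↦ ?_, fun v ↦ ?_⟩
  · induction v using DirectSum.induction_on with
    | zero => simp
    | of j b =>
      have hj : (j - 1).negOnePow = -j.negOnePow := by
        rw [← neg_eq_iff_eq_neg, ← Int.negOnePow_succ, sub_add_cancel]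
      change (total x).sign (h (lof j b)) = -h ((total x).sign (lof j b))
      rw [h_lof (sub_add_cancel j 1) rfl, total_sign_lof, total_sign_lof, hj, Units.smul_def,
        Units.smul_def, map_zsmul, h_lof (sub_add_cancel j 1) rfl, Units.val_neg, neg_zsmul]
    | add v w hv hw => simp only [map_add, hv, hw, neg_add]
  · induction v using DirectSum.induction_on with
    | zero => simp
    | of j b =>
      have hj := sub_add_cancel j 1
      change lof j b - ((total x).d (h (lof j b)) + h ((total x).d (lof j b))) ∈ _
      rw [h_lof hj rfl, total_d_lof hj, total_d_lof rfl, h_lof rfl rfl, ← map_add, ← map_sub,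
        hom_d_hom_d_apply, map_zero, sub_zero]
      exact Submodule.smul_top_le_comap_smul_top m (lof j)
        (sub_homotopy_mem_smul_top ((hx j).mem_sup hj rfl) (hs _ _) (hs _ _) b)
    | add v w hv hw =>
      rw [map_add, map_add, map_add, map_add, add_add_add_comm, add_sub_add_comm]
      exact add_mem hv hw

lemma total_d_lof_mem_smul_top {I : Ideal R} {j k : ℤ} (hk : j + 1 = k) {a : x.X j}
    (ha : (x.d j k).hom a ∈ I • (⊤ : Submodule R (x.X k))) :
    (total x).d (DirectSum.lof R ℤ (fun i ↦ x.X i) j a) ∈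
      I • (⊤ : Submodule R (⨁ i, x.X i)) := by
  rw [total_d_lof hk]
  exact Submodule.smul_top_le_comap_smul_top I (DirectSum.lof R ℤ (fun i ↦ x.X i) k) ha

lemma comp_component_total_d {N : Type*} [AddCommGroup N] [Module R N] {i j : ℤ} (hi : i + 1 = j)
    (l : x.X j →ₗ[R] N) (v : ⨁ i, x.X i) :
    (l ∘ₗ DirectSum.component R ℤ (fun i ↦ x.X i) j) ((total x).d v) =
      l ((x.d i j).hom (v i)) := by
  rw [LinearMap.comp_apply, ← DirectSum.apply_eq_component, total_d_apply v hi]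

end SignedComplex

namespace UnitQuasiIso

open SignedComplex
open scoped DirectSum

variable {R N : Type*} [CommRing R] [AddCommGroup N] [Module R N]
  {x : CochainComplex (ModuleCat R) ℤ} {Y : SignedComplex R N}
  [∀ i, Module.Projective R (x.X i)]

-- If `x ⊗ R/m` were contractible then the trace of the identity would vanish modulo `m`.
lemma exists_not_exactModAt (P : UnitQuasiIso ((total x).tensor Y)) (m : Ideal R) [m.IsMaximal] :
    ∃ j, ¬ExactModAt x m j := by
  by_contra! hx
  obtain ⟨h, hsign, hmem⟩ := exists_contraction_of_exactModAt hx
  have htrace : P.trace (.id - ((total x).d ∘ₗ h + h ∘ₗ (total x).d)) = 1 := by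
    rw [map_sub, trace_id, P.trace_anticommutator_d hsign, sub_zero]
  exact (Ideal.ne_top_iff_one m).mp ‹m.IsMaximal›.ne_top (htrace ▸ P.trace_mem hmem)

variable (P : UnitQuasiIso ((total x).tensor Y))

lemma eq_of_not_exactModAt (hX : ((total x).hom (P.kernel.tensor (total x))).Acyclic)
    {m : Ideal R} [m.IsMaximal] {i j : ℤ} (hi : ¬ExactModAt x m i) (hj : ¬ExactModAt x m j) :
    i = j := by
  by_contra hij
  obtain ⟨a, hda, l, hl, hla⟩ := exists_of_not_exactModAt hi
  obtain ⟨b, hdb, k, hk, hkb⟩ := exists_of_not_exactModAt hj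
  let lof (i : ℤ) := DirectSum.lof R ℤ (fun i ↦ x.X i) i
  let comp (i : ℤ) := DirectSum.component R ℤ (fun i ↦ x.X i) i
  have hmem := P.smul_sub_smul_twist_mem hX (μ := k ∘ₗ comp j)
    (fun v ↦ comp_component_total_d (sub_add_cancel j 1) k v ▸ hk _)
    (total_d_lof_mem_smul_top rfl hda) (total_d_lof_mem_smul_top rfl hdb)
  have hl' := apply_mem_of_mem_range_sup (μ := l ∘ₗ comp i)
    (fun v ↦ comp_component_total_d (sub_add_cancel i 1) l v ▸ hl _) hmem
  have hlof : (l ∘ₗ comp i) (lof j b) = 0 := by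
    rw [LinearMap.comp_apply, DirectSum.component.of, dif_neg (Ne.symm hij), map_zero]
  rw [map_sub, map_smul, map_smul, hlof, smul_zero, sub_zero, LinearMap.comp_apply,
    LinearMap.comp_apply, DirectSum.component.lof_self, DirectSum.component.lof_self,
    smul_eq_mul] at hl'
  exact (‹m.IsMaximal›.isPrime.mem_or_mem hl').elim hkb hla

-- Off the unique degree where `x ⊗ R/m` is not exact, a cycle and a cocycle modulo `m` lift.
lemma exists_cocycle_apply_cycle_notMem
    (hX : ((total x).hom (P.kernel.tensor (total x))).Acyclic) [∀ i, Module.Finite R (x.X i)]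
    (m : Ideal R) [m.IsMaximal] :
    ∃ (μ : (⨁ i, x.X i) →ₗ[R] R) (c : ⨁ i, x.X i),
      (∀ v, μ ((total x).d v) = 0) ∧ (total x).d c = 0 ∧ μ c ∉ m := by
  obtain ⟨j, hj⟩ := P.exists_not_exactModAt m
  have hx (i : ℤ) (hi : i ≠ j) : ExactModAt x m i := by
    by_contra h
    exact hi (P.eq_of_not_exactModAt hX h hj)
  obtain ⟨a, hda, l, hl, hla⟩ := exists_of_not_exactModAt hj
  obtain ⟨r, hr, u, hu, hda⟩ := exists_map_smul_add_eq_zero (hom_d_hom_d_apply x _ _ _)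
    ((hx (j + 1) (by simp)).mem_sup rfl rfl) hda
  obtain ⟨t, ht, k, hk, hkd⟩ := exists_smul_add_comp_eq_zero (hom_d_hom_d_apply x _ _ _)
    ((hx (j - 1) (by simp)).mem_sup (sub_add_cancel _ _) (sub_add_cancel j 1)) hl
  refine ⟨(t • l + k) ∘ₗ DirectSum.component R ℤ (fun i ↦ x.X i) j,
    DirectSum.lof R ℤ (fun i ↦ x.X i) j (r • a + u), fun v ↦ ?_, ?_, fun h ↦ ?_⟩
  · rw [comp_component_total_d (sub_add_cancel j 1), hkd]
  · rw [total_d_lof rfl, hda, map_zero]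
  · rw [LinearMap.comp_apply, DirectSum.component.lof_self, LinearMap.add_apply,
      Submodule.add_mem_iff_left _ (hk _), LinearMap.smul_apply, map_add, map_smul, smul_add,
      Submodule.add_mem_iff_left] at h
    · have := ‹m.IsMaximal›.isPrime
      exact (this.mem_or_mem h).elim ht fun h ↦ (this.mem_or_mem h).elim hr hla
    · have hlu := Submodule.smul_top_le_comap_smul_top m l hu
      exact m.mul_mem_left t (by simpa using hlu)

end UnitQuasiIso

section Invertible

open scoped DirectSum

variable {R M : Type*} [CommRing R] [AddCommGroup M] [Module R M]

-- Applying `φ` to the hypothesis gives `μ v • φ = φ v • ν`, so `ν ⊗ v` generates `Mᵛ ⊗ M` once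
-- `μ v` is inverted.
lemma smul_eq_contractLeft_smul {μ ν : M →ₗ[R] R} {v : M} (h : ∀ a, μ v • a = ν a • v)
    (t : Module.Dual R M ⊗[R] M) :
    (μ v * μ v) • t = (μ v * contractLeft R M t) • (ν ⊗ₜ[R] v) := by
  induction t with
  | zero => simp
  | add t u ht hu => rw [smul_add, ht, hu, map_add, mul_add, add_smul]
  | tmul φ a =>
    have hφ (b : M) : μ v * φ b = ν b * φ v := by simpa using congrArg φ (h b)
    have hφν : μ v • φ = φ v • ν := LinearMap.ext fun b ↦ by simp [hφ, mul_comm]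
    rw [contractLeft_apply, mul_smul, ← TensorProduct.tmul_smul, TensorProduct.smul_tmul', hφν, h,
      hφ, TensorProduct.smul_tmul_smul, mul_comm]

theorem invertible_of_forall_maximal (h : ∀ m : Ideal R, m.IsMaximal →
    ∃ (μ ν : M →ₗ[R] R) (v : M), μ v ∉ m ∧ ∀ a, μ v • a = ν a • v) :
    Module.Invertible R M := by
  refine ⟨(injective_iff_map_eq_zero _).mpr fun t ht ↦ ?_, LinearMap.range_eq_top.mp ?_⟩
  · by_contra hne
    obtain ⟨m, hm, hle⟩ := Ideal.exists_le_maximal _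
      (mt (Ideal.torsionOf_eq_top_iff (R := R) t).mp hne)
    obtain ⟨μ, ν, v, hμv, hv⟩ := h m hm
    have hmem : μ v * μ v ∈ m := hle <| by
      rw [Ideal.mem_torsionOf_iff, smul_eq_contractLeft_smul hv, ht, mul_zero, zero_smul]
    exact (hm.isPrime.mem_or_mem hmem).elim hμv hμv
  · by_contra hne
    obtain ⟨m, hm, hle⟩ := Ideal.exists_le_maximal _ hne
    obtain ⟨μ, ν, v, hμv, -⟩ := h m hm
    exact hμv (hle ⟨μ ⊗ₜ v, contractLeft_apply μ v⟩)

lemma eq_zero_or_one_of_isIdempotentElem [ConnectedSpace (PrimeSpectrum R)] {r : R}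
    (hr : IsIdempotentElem r) : r = 0 ∨ r = 1 := by
  have hclopen := PrimeSpectrum.isClopen_iff.mpr ⟨r, hr, rfl⟩
  refine (isClopen_iff.mp hclopen).imp (fun h ↦ ?_) fun h ↦ ?_
  · exact PrimeSpectrum.basicOpen_injOn_isIdempotentElem hr .zero (by ext1; simpa using h)
  · exact PrimeSpectrum.basicOpen_injOn_isIdempotentElem hr .one (by ext1; simpa using h)

lemma end_eq_zero_or_one_of_isIdempotentElem [ConnectedSpace (PrimeSpectrum R)]
    [Module.Invertible R M] {e : Module.End R M} (he : IsIdempotentElem e) : e = 0 ∨ e = 1 := by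
  obtain ⟨r, rfl⟩ := (Module.Invertible.toModuleEnd_bijective R M).2 e
  have hr : IsIdempotentElem r := (Module.Invertible.toModuleEnd_bijective R M).1 <| by
    rw [map_mul, he.eq]
  obtain rfl | rfl := eq_zero_or_one_of_isIdempotentElem hr
  · exact .inl (map_zero _)
  · exact .inr (map_one _)

variable (R) {ι : Type*} (H : ι → Type*) [∀ i, AddCommGroup (H i)]
  [∀ i, Module R (H i)] [Module.Invertible R (⨁ i, H i)]

lemma finite_of_invertible_directSum (i : ι) : Module.Finite R (H i) := by
  classical
  exact .of_surjective (DirectSum.component R ι H i) fun m ↦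
    ⟨DirectSum.lof R ι H i m, DirectSum.component.lof_self R _ _⟩

lemma projective_of_invertible_directSum (i : ι) : Module.Projective R (H i) := by
  classical
  exact .of_split (DirectSum.lof R ι H i) (DirectSum.component R ι H i)
    (DirectSum.component_comp_lof_same R i)

theorem exists_nontrivial_and_subsingleton_of_invertible_directSum
    [ConnectedSpace (PrimeSpectrum R)] :
    ∃ b, Nontrivial (H b) ∧ ∀ i, i ≠ b → Subsingleton (H i) := by
  classical
  have : Nontrivial R := PrimeSpectrum.nonempty_iff_nontrivial.mp inferInstance
  have : Nontrivial (⨁ i, H i) := not_subsingleton_iff_nontrivial.mp fun _ ↦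
    zero_ne_one <| FaithfulSMul.eq_of_smul_eq_smul (M := R) fun v : ⨁ i, H i ↦ Subsingleton.elim _ _
  obtain ⟨v, hv⟩ := exists_ne (0 : ⨁ i, H i)
  obtain ⟨b, hb⟩ : ∃ b, v b ≠ 0 := by
    by_contra! h
    exact hv (DFinsupp.ext h)
  refine ⟨b, ⟨v b, 0, hb⟩, fun i hi ↦ subsingleton_of_forall_eq 0 fun c ↦ ?_⟩
  let e : Module.End R (⨁ i, H i) := DirectSum.lof R ι H b ∘ₗ DirectSum.component R ι H b
  have hcomp (w : ⨁ i, H i) : DirectSum.component R ι H b (e w) = w b :=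
    DirectSum.component.lof_self R _ _
  have he : IsIdempotentElem e := LinearMap.ext fun w ↦ congrArg (DirectSum.lof R ι H b) (hcomp w)
  have he0 : e ≠ 0 := fun h ↦ hb <| by rw [← hcomp, h, LinearMap.zero_apply, map_zero]
  have he1 : e = 1 := (end_eq_zero_or_one_of_isIdempotentElem he).resolve_left he0
  have hlof : e (DirectSum.lof R ι H i c) = 0 := by
    rw [LinearMap.comp_apply, DirectSum.component.of, dif_neg hi, map_zero]
  rw [he1, Module.End.one_apply] at hlof
  rw [← DirectSum.component.lof_self R (M := H) i c, hlof, map_zero]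

end Invertible

namespace SignedComplex

variable {R M : Type*} [CommRing R] [AddCommGroup M] [Module R M]

/-- The homology of a complex, in all degrees at once: cycles modulo boundaries. -/
abbrev Homology (X : SignedComplex R M) : Type _ :=
  LinearMap.ker X.d ⧸ (LinearMap.range X.d).submoduleOf (LinearMap.ker X.d)

/-- The functional on homology induced by a functional vanishing on boundaries. -/
def homologyLift (X : SignedComplex R M) (μ : M →ₗ[R] R) (hμ : ∀ m, μ (X.d m) = 0) :
    X.Homology →ₗ[R] R :=
  Submodule.liftQ _ (μ ∘ₗ (LinearMap.ker X.d).subtype) <| by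
    rintro ⟨_, _⟩ ⟨m, rfl⟩
    exact hμ m

end SignedComplex

namespace UnitQuasiIso

open SignedComplex
open scoped DirectSum

variable {R N : Type*} [CommRing R] [AddCommGroup N] [Module R N]
  {x : CochainComplex (ModuleCat R) ℤ} {Y : SignedComplex R N}

theorem invertible_homology (P : UnitQuasiIso ((total x).tensor Y))
    [∀ i, Module.Finite R (x.X i)] [∀ i, Module.Projective R (x.X i)]
    {a b : ℤ} (hx : ∀ i, i < a ∨ b < i → Subsingleton (x.X i)) :
    Module.Invertible R (total x).Homology := by
  have hX := (P.acyclic_kernel.tensor_total hx).hom_total hx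
  refine invertible_of_forall_maximal fun m hm ↦ ?_
  obtain ⟨μ, c, hμ, hc, hμc⟩ := P.exists_cocycle_apply_cycle_notMem hX m
  refine ⟨(total x).homologyLift μ hμ, (total x).homologyLift (μ ∘ₗ P.twist) fun v ↦ ?_,
    Submodule.Quotient.mk ⟨c, hc⟩, hμc, fun h ↦ ?_⟩
  · rw [LinearMap.comp_apply, ← neg_eq_zero, ← map_neg, ← P.d_twist, hμ]
  · obtain ⟨⟨v, hv⟩, rfl⟩ := Submodule.Quotient.mk_surjective _ h
    have exchange : μ c • v - μ (P.twist v) • c ∈ LinearMap.range (total x).d ⊔ (⊥ : Ideal R) • ⊤ :=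
      P.smul_sub_smul_twist_mem hX (by simpa using hμ) (by simpa using hv) (by simpa using hc)
    rw [Submodule.bot_smul, sup_bot_eq] at exchange
    exact (Submodule.Quotient.eq _).mpr exchange

end UnitQuasiIso

section HomologicalComplex

variable {R : Type*} [CommRing R] (x : CochainComplex (ModuleCat R) ℤ)

lemma d_apply_eq_zero_iff {i j : ℤ} (h : i + 1 = j) {a : x.X i} :
    (x.d i j).hom a = 0 ↔ ∃ c, (x.iCycles i).hom c = a := by
  have hex := ShortComplex.exact_of_f_is_kernel
    (ShortComplex.mk (x.iCycles i) (x.d i j) (by simp))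
    (x.cyclesIsKernel i j ((ComplexShape.up ℤ).next_eq' h))
  exact (ShortComplex.ShortExact.moduleCat_exact_iff_function_exact _).mp hex a

lemma injective_iCycles (i : ℤ) : Function.Injective (x.iCycles i).hom :=
  (ModuleCat.mono_iff_injective _).mp inferInstance

lemma surjective_homologyπ (i : ℤ) : Function.Surjective (x.homologyπ i).hom :=
  (ModuleCat.epi_iff_surjective _).mp inferInstance

lemma homologyπ_apply_eq_zero_iff {i j : ℤ} (h : i + 1 = j) {c : x.cycles j} :
    (x.homologyπ j).hom c = 0 ↔ ∃ a, (x.d i j).hom a = (x.iCycles j).hom c := by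
  have hex := ShortComplex.exact_of_g_is_cokernel
    (ShortComplex.mk (x.toCycles i j) (x.homologyπ j) (by simp))
    (x.homologyIsCokernel i j ((ComplexShape.up ℤ).prev_eq' h))
  refine ((ShortComplex.ShortExact.moduleCat_exact_iff_function_exact _).mp hex c).trans <|
    exists_congr fun a ↦ ?_
  rw [← (injective_iCycles x j).eq_iff, ← x.toCycles_i i j]
  rfl

end HomologicalComplex

namespace SignedComplex

open scoped DirectSum

variable {R : Type*} [CommRing R] {x : CochainComplex (ModuleCat R) ℤ}

lemma total_sign_apply (m : ⨁ i, x.X i) (i : ℤ) : (total x).sign m i = i.negOnePow • m i := rfl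

lemma total_d_eq_zero_iff {m : ⨁ i, x.X i} :
    (total x).d m = 0 ↔ ∀ i, (x.d i (i + 1)).hom (m i) = 0 := by
  refine ⟨fun h i ↦ ?_, fun h ↦ DFinsupp.ext fun i ↦ ?_⟩
  · rw [← total_d_apply m rfl, h, DirectSum.zero_apply]
  · obtain ⟨i, rfl⟩ := (Equiv.addRight (1 : ℤ)).surjective i
    exact (total_d_apply m rfl).trans (h i)

lemma exists_total_d_eq_iff {m : ⨁ i, x.X i} :
    (∃ v, (total x).d v = m) ↔ ∀ i, ∃ a, (x.d (i - 1) i).hom a = m i := by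
  classical
  refine ⟨?_, fun h ↦ LinearMap.mem_range.mp ?_⟩
  · rintro ⟨v, rfl⟩ i
    exact ⟨v (i - 1), (total_d_apply v (sub_add_cancel i 1)).symm⟩
  · rw [← DirectSum.sum_support_of m]
    refine Submodule.sum_mem _ fun i _ ↦ ?_
    obtain ⟨a, ha⟩ := h i
    exact ⟨_, (total_d_lof (sub_add_cancel i 1) a).trans (congrArg _ ha)⟩

variable (x)

/-- The cycles of the total complex, represented by families of cycles. -/
noncomputable def cyclesToHomology : (⨁ i, x.cycles i) →ₗ[R] (total x).Homology :=
  Submodule.mkQ _ ∘ₗ (DirectSum.lmap fun i ↦ (x.iCycles i).hom).codRestrict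
    (LinearMap.ker (total x).d) fun c ↦ total_d_eq_zero_iff.mpr fun i ↦
      (d_apply_eq_zero_iff x rfl).mpr ⟨c i, rfl⟩

lemma surjective_cyclesToHomology : Function.Surjective (cyclesToHomology x) := by
  refine (Submodule.mkQ_surjective _).comp fun ⟨m, hm⟩ ↦ ?_
  obtain ⟨c, rfl⟩ : m ∈ LinearMap.range (DirectSum.lmap fun i ↦ (x.iCycles i).hom) := by
    rw [DirectSum.range_lmap]
    exact fun i _ ↦ (d_apply_eq_zero_iff x rfl).mp (total_d_eq_zero_iff.mp hm i)
  exact ⟨c, rfl⟩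

lemma ker_cyclesToHomology : LinearMap.ker (cyclesToHomology x) =
    LinearMap.ker (DirectSum.lmap fun i ↦ (x.homologyπ i).hom) := by
  ext c
  refine (Submodule.Quotient.mk_eq_zero _).trans <| exists_total_d_eq_iff.trans ?_
  rw [LinearMap.mem_ker, DFinsupp.ext_iff]
  exact forall_congr' fun i ↦ (homologyπ_apply_eq_zero_iff x (sub_add_cancel i 1)).symm

/-- The homology of the total complex is the direct sum of the homology modules. -/
noncomputable def homologyTotalEquiv : (total x).Homology ≃ₗ[R] ⨁ i, x.homology i :=
  (LinearMap.quotKerEquivOfSurjective _ (surjective_cyclesToHomology x)).symm ≪≫ₗ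
    Submodule.quotEquivOfEq _ _ (ker_cyclesToHomology x) ≪≫ₗ
    LinearMap.quotKerEquivOfSurjective _
      ((DirectSum.lmap_surjective _).mpr (surjective_homologyπ x))

end SignedComplex

namespace UnitQuasiIso

open SignedComplex
open scoped DirectSum

/-- Transport of a quasi-isomorphism to `R` along an isomorphism of complexes. -/
def ofEquiv {R M N : Type*} [CommRing R] [AddCommGroup M] [Module R M] [AddCommGroup N]
    [Module R N] {W : SignedComplex R M} {V : SignedComplex R N} (P : UnitQuasiIso V)
    (e : M ≃ₗ[R] N) (he : IsHom W V e.toLinearMap) : UnitQuasiIso W where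
  ev := P.ev ∘ₗ e.toLinearMap
  z := e.symm P.z
  ev_d w := by rw [LinearMap.comp_apply, he.map_d, P.ev_d]
  ev_sign w := by rw [LinearMap.comp_apply, he.map_sign, P.ev_sign, LinearMap.comp_apply]
  d_z := by simpa [P.d_z] using (he.symm.map_d P.z).symm
  sign_z := by simpa [P.sign_z] using (he.symm.map_sign P.z).symm
  ev_z := by simp [P.ev_z]
  exact w hd hev := by
    obtain ⟨v, hv⟩ := P.exact (e w) (by simpa [hd] using (he.map_d w).symm) hev
    exact ⟨e.symm v, by simpa [hv] using (he.symm.map_d v).symm⟩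

variable {R : Type*} [CommRing R] {x : CochainComplex (ModuleCat R) ℤ}

theorem nonempty_of_homologyEquiv (e : x.homology 0 ≃ₗ[R] R) (ε : x.X 0 →ₗ[R] R)
    (hε : ∀ c, ε ((x.iCycles 0).hom c) = e ((x.homologyπ 0).hom c))
    (hx : ∀ i, i ≠ 0 → Subsingleton (x.homology i)) : Nonempty (UnitQuasiIso (total x)) := by
  obtain ⟨c, hc⟩ := surjective_homologyπ x 0 (e.symm 1)
  have hd (a : x.X (0 - 1)) : ε ((x.d (0 - 1) 0).hom a) = 0 := by
    have ha : (x.iCycles 0).hom ((x.toCycles (0 - 1) 0).hom a) = (x.d (0 - 1) 0).hom a := by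
      rw [← x.toCycles_i, ModuleCat.hom_comp, LinearMap.comp_apply]
    rw [← ha, hε, (homologyπ_apply_eq_zero_iff x (sub_add_cancel 0 1)).mpr ⟨a, ha.symm⟩, map_zero]
  refine ⟨⟨ε ∘ₗ DirectSum.component R ℤ _ 0,
    DirectSum.lof R ℤ (fun i ↦ x.X i) 0 ((x.iCycles 0).hom c),
    fun w ↦ ?_, fun w ↦ ?_, ?_, ?_, ?_, fun w hw hεw ↦ exists_total_d_eq_iff.mpr fun i ↦ ?_⟩⟩
  · exact (congrArg ε (total_d_apply w (sub_add_cancel 0 1))).trans (hd _)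
  · exact congrArg ε ((total_sign_apply w 0).trans (one_smul _ _))
  · rw [total_d_lof rfl, (d_apply_eq_zero_iff x rfl).mpr ⟨c, rfl⟩, map_zero]
  · rw [total_sign_lof, Int.negOnePow_zero, one_smul]
  · rw [LinearMap.comp_apply, DirectSum.component.lof_self, hε, hc, e.apply_symm_apply]
  · obtain ⟨c, hc⟩ := (d_apply_eq_zero_iff x rfl).mp (total_d_eq_zero_iff.mp hw i)
    rw [← hc]
    refine (homologyπ_apply_eq_zero_iff x (sub_add_cancel i 1)).mp ?_
    obtain rfl | hi := eq_or_ne i 0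
    · refine e.injective ?_
      rw [← hε, hc, map_zero]
      exact hεw
    · have := hx i hi
      exact Subsingleton.elim _ _

theorem nonempty_of_quasiIso
    (f : x ⟶ (HomologicalComplex.single (ModuleCat R) (ComplexShape.up ℤ) 0).obj
      (ModuleCat.of R R)) [QuasiIso f] : Nonempty (UnitQuasiIso (total x)) := by
  let e : x.homology 0 ≅ ModuleCat.of R R := asIso (HomologicalComplex.homologyMap f 0) ≪≫
    HomologicalComplex.singleObjHomologySelfIso (ComplexShape.up ℤ) 0 (ModuleCat.of R R)
  let ε : x.X 0 ⟶ ModuleCat.of R R := f.f 0 ≫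
    (HomologicalComplex.singleObjXSelf (ComplexShape.up ℤ) 0 (ModuleCat.of R R)).hom
  have hε : x.iCycles 0 ≫ ε = x.homologyπ 0 ≫ e.hom := by
    simp [e, ε, HomologicalComplex.singleObjCyclesSelfIso_hom]
  refine nonempty_of_homologyEquiv e.toLinearEquiv ε.hom
    (fun c ↦ LinearMap.congr_fun (congrArg ModuleCat.Hom.hom hε) c) fun i hi ↦ ?_
  have hexact := HomologicalComplex.exactAt_single_obj (ComplexShape.up ℤ) 0
    (ModuleCat.of R R) i hi
  exact ModuleCat.subsingleton_of_isZero
    ((quasiIsoAt_iff_exactAt' f i hexact).mp inferInstance).isZero_homology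

end UnitQuasiIso

section DirectSum

open scoped DirectSum

lemma linearMap_tensor_ext {R ι κ B : Type*} [CommRing R] [DecidableEq ι] [DecidableEq κ]
    {M : ι → Type*} [∀ i, AddCommGroup (M i)] [∀ i, Module R (M i)]
    {N : κ → Type*} [∀ j, AddCommGroup (N j)] [∀ j, Module R (N j)]
    [AddCommGroup B] [Module R B] {φ ψ : (⨁ i, M i) ⊗[R] (⨁ j, N j) →ₗ[R] B}
    (h : ∀ i a j c, φ (DirectSum.lof R ι M i a ⊗ₜ DirectSum.lof R κ N j c) =
      ψ (DirectSum.lof R ι M i a ⊗ₜ DirectSum.lof R κ N j c)) : φ = ψ :=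
  TensorProduct.ext <| DirectSum.linearMap_ext R fun i ↦ LinearMap.ext fun a ↦
    DirectSum.linearMap_ext R fun j ↦ LinearMap.ext fun c ↦ h i a j c

end DirectSum

section Tensor

open SignedComplex
open scoped DirectSum

variable {R : Type} [CommRing R] (x y : CochainComplex (ModuleCat R) ℤ)

lemma ιTensorObj_comp_d {i j n n' : ℤ} (h : i + j = n) (hn : n + 1 = n') :
    HomologicalComplex.ιTensorObj x y i j n h ≫ (HomologicalComplex.tensorObj x y).d n n' =
      x.d i (i + 1) ▷ y.X j ≫ HomologicalComplex.ιTensorObj x y (i + 1) j n' (by omega) +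
        i.negOnePow • x.X i ◁ y.d j (j + 1) ≫
          HomologicalComplex.ιTensorObj x y i (j + 1) n' (by omega) := by
  rw [HomologicalComplex.mapBifunctor.d_eq, Preadditive.comp_add,
    HomologicalComplex.mapBifunctor.ι_D₁, HomologicalComplex.mapBifunctor.ι_D₂,
    HomologicalComplex.mapBifunctor.d₁_eq x y (curriedTensor (ModuleCat R)) (ComplexShape.up ℤ)
      (i₁' := i + 1) rfl j n' (by change i + 1 + j = n'; omega),
    HomologicalComplex.mapBifunctor.d₂_eq x y (curriedTensor (ModuleCat R)) (ComplexShape.up ℤ)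
      i (i₂' := j + 1) rfl n' (by change i + (j + 1) = n'; omega)]
  congr 1
  exact one_smul _ _

lemma d_ιTensorObj {i j n n' : ℤ} (h : i + j = n) (hn : n + 1 = n') (a : x.X i) (c : y.X j) :
    ((HomologicalComplex.tensorObj x y).d n n').hom
        ((HomologicalComplex.ιTensorObj x y i j n h).hom (a ⊗ₜ c)) =
      (HomologicalComplex.ιTensorObj x y (i + 1) j n' (by omega)).hom
          ((x.d i (i + 1)).hom a ⊗ₜ c) +
        i.negOnePow • (HomologicalComplex.ιTensorObj x y i (j + 1) n' (by omega)).hom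
          (a ⊗ₜ (y.d j (j + 1)).hom c) :=
  LinearMap.congr_fun (congrArg ModuleCat.Hom.hom (ιTensorObj_comp_d x y h hn)) (a ⊗ₜ c)

/-- The comparison map from the tensor product of the total modules to the total module of the
tensor product of complexes. -/
noncomputable def tensorToTotal :
    (⨁ i, x.X i) ⊗[R] (⨁ j, y.X j) →ₗ[R] ⨁ n, (HomologicalComplex.tensorObj x y).X n :=
  DirectSum.toModule R (ℤ × ℤ) _ (fun p ↦
    DirectSum.lof R ℤ (fun n ↦ (HomologicalComplex.tensorObj x y).X n) (p.1 + p.2) ∘ₗ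
      (HomologicalComplex.ιTensorObj x y p.1 p.2 (p.1 + p.2) rfl).hom) ∘ₗ
    (TensorProduct.directSum R R (fun i ↦ x.X i) (fun j ↦ y.X j)).toLinearMap

lemma tensorToTotal_lof_tmul_lof {i j n : ℤ} (h : i + j = n) (a : x.X i) (c : y.X j) :
    tensorToTotal x y
        (DirectSum.lof R ℤ (fun i ↦ x.X i) i a ⊗ₜ DirectSum.lof R ℤ (fun j ↦ y.X j) j c) =
      DirectSum.lof R ℤ (fun n ↦ (HomologicalComplex.tensorObj x y).X n) n
        ((HomologicalComplex.ιTensorObj x y i j n h).hom (a ⊗ₜ c)) := by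
  subst h
  rw [tensorToTotal, LinearMap.comp_apply, LinearEquiv.coe_coe,
    TensorProduct.directSum_lof_tmul_lof]
  exact DirectSum.toModule_lof R (i, j) _

/-- The inverse of `tensorToTotal`. -/
noncomputable def totalToTensor :
    (⨁ n, (HomologicalComplex.tensorObj x y).X n) →ₗ[R] (⨁ i, x.X i) ⊗[R] (⨁ j, y.X j) :=
  DirectSum.toModule R ℤ _ fun n ↦ (HomologicalComplex.mapBifunctorDesc (K₁ := x) (K₂ := y)
    (F := curriedTensor (ModuleCat R)) (c := ComplexShape.up ℤ) (j := n)
    (A := ModuleCat.of R ((⨁ i, x.X i) ⊗[R] (⨁ j, y.X j))) fun i j _ ↦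
      ModuleCat.ofHom (TensorProduct.map (DirectSum.lof R ℤ (fun i ↦ x.X i) i)
        (DirectSum.lof R ℤ (fun j ↦ y.X j) j))).hom

lemma totalToTensor_lof_ιTensorObj {i j n : ℤ} (h : i + j = n) (a : x.X i) (c : y.X j) :
    totalToTensor x y (DirectSum.lof R ℤ (fun n ↦ (HomologicalComplex.tensorObj x y).X n) n
        ((HomologicalComplex.ιTensorObj x y i j n h).hom (a ⊗ₜ c))) =
      DirectSum.lof R ℤ (fun i ↦ x.X i) i a ⊗ₜ DirectSum.lof R ℤ (fun j ↦ y.X j) j c := by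
  rw [totalToTensor, DirectSum.toModule_lof]
  exact LinearMap.congr_fun (congrArg ModuleCat.Hom.hom
    (HomologicalComplex.ι_mapBifunctorDesc (K₁ := x) (K₂ := y)
      (F := curriedTensor (ModuleCat R)) (c := ComplexShape.up ℤ) (fun i j _ ↦
      ModuleCat.ofHom (TensorProduct.map (DirectSum.lof R ℤ (fun i ↦ x.X i) i)
        (DirectSum.lof R ℤ (fun j ↦ y.X j) j))) i j h)) (a ⊗ₜ[R] c)

variable {x y} in
lemma linearMap_tensorObj_ext {B : Type} [AddCommGroup B] [Module R B]
    {φ ψ : (⨁ n, (HomologicalComplex.tensorObj x y).X n) →ₗ[R] B}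
    (h : ∀ (i j n : ℤ) (hn : i + j = n) (a : x.X i) (c : y.X j),
      φ (DirectSum.lof R ℤ (fun n ↦ (HomologicalComplex.tensorObj x y).X n) n
          ((HomologicalComplex.ιTensorObj x y i j n hn).hom (a ⊗ₜ c))) =
        ψ (DirectSum.lof R ℤ (fun n ↦ (HomologicalComplex.tensorObj x y).X n) n
          ((HomologicalComplex.ιTensorObj x y i j n hn).hom (a ⊗ₜ c)))) : φ = ψ := by
  let restrict (φ : (⨁ n, (HomologicalComplex.tensorObj x y).X n) →ₗ[R] B) (n : ℤ) :
      (HomologicalComplex.tensorObj x y).X n ⟶ ModuleCat.of R B :=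
    ModuleCat.ofHom (φ ∘ₗ DirectSum.lof R ℤ (fun n ↦ (HomologicalComplex.tensorObj x y).X n) n)
  have key (n : ℤ) : restrict φ n = restrict ψ n :=
    HomologicalComplex.mapBifunctor.hom_ext fun i j hn ↦
      ModuleCat.hom_ext <| TensorProduct.ext' <| h i j n hn
  exact DirectSum.linearMap_ext R fun n ↦ congrArg ModuleCat.Hom.hom (key n)

/-- The total module of a tensor product of complexes is the tensor product of their total
modules. -/
noncomputable def tensorTotalEquiv :
    (⨁ i, x.X i) ⊗[R] (⨁ j, y.X j) ≃ₗ[R] ⨁ n, (HomologicalComplex.tensorObj x y).X n :=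
  LinearEquiv.ofLinearMap (tensorToTotal x y) (totalToTensor x y)
    (linearMap_tensorObj_ext fun _ _ _ h a c ↦
      (congrArg _ (totalToTensor_lof_ιTensorObj x y h a c)).trans
        (tensorToTotal_lof_tmul_lof x y h a c))
    (linearMap_tensor_ext fun _ a _ c ↦
      (congrArg _ (tensorToTotal_lof_tmul_lof x y rfl a c)).trans
        (totalToTensor_lof_ιTensorObj x y rfl a c))

lemma isHom_tensorToTotal : IsHom ((total x).tensor (total y))
    (total (HomologicalComplex.tensorObj x y)) (tensorToTotal x y) where
  map_d m := by
    refine LinearMap.congr_fun (f := tensorToTotal x y ∘ₗ ((total x).tensor (total y)).d)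
      (g := (total _).d ∘ₗ tensorToTotal x y) (linearMap_tensor_ext fun i a j c ↦ ?_) m
    rw [LinearMap.comp_apply, LinearMap.comp_apply, tensorToTotal_lof_tmul_lof x y rfl,
      total_d_lof rfl, d_ιTensorObj x y rfl rfl,
      tensor_d_tmul, total_d_lof rfl, total_d_lof rfl, total_sign_lof, map_add, map_add,
      tensorToTotal_lof_tmul_lof x y (add_right_comm i 1 j), Units.smul_def, Units.smul_def,
      ← TensorProduct.smul_tmul', map_zsmul, map_zsmul,
      tensorToTotal_lof_tmul_lof x y (add_assoc i j 1).symm]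
  map_sign m := by
    refine LinearMap.congr_fun (f := tensorToTotal x y ∘ₗ ((total x).tensor (total y)).sign)
      (g := (total _).sign ∘ₗ tensorToTotal x y) (linearMap_tensor_ext fun i a j c ↦ ?_) m
    rw [LinearMap.comp_apply, LinearMap.comp_apply, tensorToTotal_lof_tmul_lof x y rfl,
      tensor_sign_tmul, total_sign_lof, total_sign_lof, total_sign_lof, Int.negOnePow_add]
    simp only [Units.smul_def, ← TensorProduct.smul_tmul', TensorProduct.tmul_smul, smul_smul,
      map_zsmul, tensorToTotal_lof_tmul_lof x y rfl, Units.val_mul, mul_comm]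

end Tensor

/-- let `x` be a perfect complex of `R`-modules (a bounded complex of
finitely generated projective modules) that is invertible: there is a complex `y` with a
quasi-isomorphism `x ⊗ y → R[0]` (the tensor unit).  Then the total homology
`⊕ᵢ Hᵢ(x)` is an invertible `R`-module, each `Hᵢ(x)` is finitely generated projective,
and if `Spec R` is connected then the homology of `x` is nonzero in exactly one
degree `b`. -/
theorem stmt15 (R : Type) [CommRing R]
    (x : HomologicalComplex (ModuleCat R) (ComplexShape.up ℤ))
    (hfg : ∀ i, Module.Finite R (x.X i)) (hproj : ∀ i, Module.Projective R (x.X i))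
    (hbdd : ∃ a b : ℤ, ∀ i, (i < a ∨ b < i) → IsZero (x.X i))
    (hinv : ∃ (y : HomologicalComplex (ModuleCat R) (ComplexShape.up ℤ))
      (f : HomologicalComplex.tensorObj x y ⟶
        𝟙_ (HomologicalComplex (ModuleCat R) (ComplexShape.up ℤ))),
      QuasiIso f) :
    (∃ (N : Type) (_ : AddCommGroup N) (_ : Module R N),
        Nonempty (((DirectSum ℤ fun i => x.homology i) ⊗[R] N) ≃ₗ[R] R)) ∧
    (∀ i, Module.Finite R (x.homology i) ∧ Module.Projective R (x.homology i)) ∧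
    (ConnectedSpace (PrimeSpectrum R) →
      ∃ b : ℤ, ¬ IsZero (x.homology b) ∧ ∀ i, i ≠ b → IsZero (x.homology i)) := by
  obtain ⟨a, b, hab⟩ := hbdd
  obtain ⟨y, f, _⟩ := hinv
  obtain ⟨Q⟩ := UnitQuasiIso.nonempty_of_quasiIso f
  let P := Q.ofEquiv (tensorTotalEquiv x y) (isHom_tensorToTotal x y)
  have htotal : Module.Invertible R (SignedComplex.total x).Homology :=
    P.invertible_homology fun i hi ↦ ModuleCat.subsingleton_of_isZero (hab i hi)
  have hinvertible : Module.Invertible R (DirectSum ℤ fun i ↦ x.homology i) :=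
    .congr (SignedComplex.homologyTotalEquiv x)
  refine ⟨⟨Module.Dual R (DirectSum ℤ fun i ↦ x.homology i), inferInstance, inferInstance,
    ⟨TensorProduct.comm R _ _ ≪≫ₗ Module.Invertible.linearEquiv R _⟩⟩,
    fun i ↦ ⟨finite_of_invertible_directSum R (fun i ↦ x.homology i) i,
      projective_of_invertible_directSum R (fun i ↦ x.homology i) i⟩, fun _ ↦ ?_⟩
  obtain ⟨d, hd, hne⟩ :=
    exists_nontrivial_and_subsingleton_of_invertible_directSum R fun i ↦ x.homology i
  refine ⟨d, fun h ↦ not_subsingleton _ (ModuleCat.subsingleton_of_isZero h), fun i hi ↦ ?_⟩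
  have := hne i hi
  exact ModuleCat.isZero_of_subsingleton _
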